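/- Let 0 < α < β, 1 < p < ∞, and define q by p/q = 1 - α/β. Then for all f in the Sobolev space W^{α,p}(ℝ^d) ∩ B^{α-β,∞}_∞(ℝ^d), the improved Sobolev inequality ‖f‖_{L^q} ≤ C (‖f‖_{W^{α,p}})^{1-α/β} (‖f‖_{B^{α-β,∞}_∞})^{α/β} holds with C depending only on α, β, p, d. -/

import Mathlib

open MeasureTheory FourierTransform SchwartzMap
open scoped ENNReal Real

/-- Littlewood–Paley block: for `j = 0` this is the low-frequency block `Δ_{-1} = S₀`
(Fourier multiplier `φ`), and for `j ≥ 1` it is the dyadic block `Δ_{j-1}` with multiplier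
`ψ(ξ/2^{j-1}) = φ(ξ/2^j) - φ(ξ/2^{j-1})`, where `φ ∈ C_c^∞` equals `1` near the origin. -/
noncomputable def LPblock {d : ℕ} (φ : EuclideanSpace ℝ (Fin d) → ℝ) (j : ℕ)
    (f : EuclideanSpace ℝ (Fin d) → ℂ) : EuclideanSpace ℝ (Fin d) → ℂ :=
  if j = 0 then 𝓕⁻ (fun ξ => (φ ξ : ℂ) * 𝓕 f ξ)
  else 𝓕⁻ (fun ξ =>
    ((φ ((2 : ℝ) ^ (-(j : ℝ)) • ξ) - φ ((2 : ℝ) ^ (-(j : ℝ) + 1) • ξ) : ℝ) : ℂ) * 𝓕 f ξ)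

/-- The Besov norm `‖f‖_{B^{s,∞}_q} = sup_{j ≥ -1} 2^{js} ‖Δ_j f‖_{L^q}` (blocks reindexed
by `j : ℕ`, `j` standing for the dyadic index `j - 1`). -/
noncomputable def besovNorm {d : ℕ} (φ : EuclideanSpace ℝ (Fin d) → ℝ) (s : ℝ) (q : ℝ≥0∞)
    (f : EuclideanSpace ℝ (Fin d) → ℂ) : ℝ≥0∞ :=
  ⨆ j : ℕ, ENNReal.ofReal ((2 : ℝ) ^ (((j : ℝ) - 1) * s)) * eLpNorm (LPblock φ j f) q volume

/-- The nonhomogeneous Sobolev (Bessel potential) norm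
`‖f‖_{W^{α,p}} = ‖(I - Δ)^{α/2} f‖_{L^p}`, via the Fourier multiplier `(1+|ξ|²)^{α/2}`. -/
noncomputable def besselNorm {d : ℕ} (α p : ℝ) (f : EuclideanSpace ℝ (Fin d) → ℂ) : ℝ≥0∞ :=
  eLpNorm (𝓕⁻ fun ξ => (((1 + ‖ξ‖ ^ 2) ^ (α / 2) : ℝ) : ℂ) * 𝓕 f ξ)
    (ENNReal.ofReal p) volume

/-- uncentered Hardy-Littlewood maximal function -/
noncomputable def HLM {d : ℕ} (h : EuclideanSpace ℝ (Fin d) → ℝ≥0∞)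
    (x : EuclideanSpace ℝ (Fin d)) : ℝ≥0∞ :=
  ⨆ (b : EuclideanSpace ℝ (Fin d) × ℝ) (_ : x ∈ Metric.ball b.1 b.2),
    (volume (Metric.ball b.1 b.2))⁻¹ * ∫⁻ y in Metric.ball b.1 b.2, h y

theorem HLM_isOpen {d : ℕ} (h : EuclideanSpace ℝ (Fin d) → ℝ≥0∞) (t : ℝ≥0∞) :
    IsOpen {x | t < HLM h x} := by
  have : {x | t < HLM h x} = ⋃ (b : EuclideanSpace ℝ (Fin d) × ℝ)
      (_ : t < (volume (Metric.ball b.1 b.2))⁻¹ * ∫⁻ y in Metric.ball b.1 b.2, h y),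
      Metric.ball b.1 b.2 := by
    ext x
    simp only [Set.mem_ofPred_eq, HLM, lt_iSup_iff, Set.mem_iUnion, exists_prop]
    constructor
    · rintro ⟨b, h1, h2⟩; exact ⟨b, h2, h1⟩
    · rintro ⟨b, h1, h2⟩; exact ⟨b, h2, h1⟩
  rw [this]
  exact isOpen_iUnion fun b => isOpen_iUnion fun _ => Metric.isOpen_ball

theorem HLM_measurable {d : ℕ} (h : EuclideanSpace ℝ (Fin d) → ℝ≥0∞) : Measurable (HLM h) :=
  measurable_of_Ioi fun t => (HLM_isOpen h t).measurableSet

theorem HLM_mono_add {d : ℕ} (h k : EuclideanSpace ℝ (Fin d) → ℝ≥0∞) (t : ℝ≥0∞)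
    (hk : ∀ x, h x ≤ k x + t) (x) : HLM h x ≤ HLM k x + t := by
  refine iSup₂_le fun b hb => ?_
  have hr : 0 < b.2 := Metric.pos_of_mem_ball hb
  have h0 : volume (Metric.ball b.1 b.2) ≠ 0 := (Metric.measure_ball_pos volume b.1 hr).ne'
  have h1 : volume (Metric.ball b.1 b.2) ≠ ⊤ := measure_ball_lt_top.ne
  calc (volume (Metric.ball b.1 b.2))⁻¹ * ∫⁻ y in Metric.ball b.1 b.2, h y
      ≤ (volume (Metric.ball b.1 b.2))⁻¹ * ∫⁻ y in Metric.ball b.1 b.2, (k y + t) := by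
        gcongr; exact hk _
    _ = (volume (Metric.ball b.1 b.2))⁻¹ * (∫⁻ y in Metric.ball b.1 b.2, k y) + t := by
        rw [lintegral_add_right _ measurable_const, mul_add]
        congr 1
        rw [setLIntegral_const, mul_comm t, ← mul_assoc, ENNReal.inv_mul_cancel h0 h1, one_mul]
    _ ≤ _ := by
        gcongr
        exact le_iSup₂_of_le (f := fun (b : EuclideanSpace ℝ (Fin d) × ℝ) (_ : x ∈ Metric.ball b.1 b.2) => (volume (Metric.ball b.1 b.2))⁻¹ * ∫⁻ y in Metric.ball b.1 b.2, k y) b hb le_rfl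

theorem HLM_weak {d : ℕ} (hd : 0 < d) (h : EuclideanSpace ℝ (Fin d) → ℝ≥0∞)
    (hI : ∫⁻ x, h x ≠ ⊤) (t : ℝ≥0∞) (ht : t ≠ 0) (ht' : t ≠ ⊤) :
    volume {x | t < HLM h x} ≤ ENNReal.ofReal (5 ^ d) / t * ∫⁻ x, h x := by
  have : Nonempty (Fin d) := ⟨⟨0, hd⟩⟩
  let E := EuclideanSpace ℝ (Fin d)
  let T : Set (E × ℝ) := {b | 0 < b.2 ∧ t < (volume (Metric.ball b.1 b.2))⁻¹ *
    ∫⁻ y in Metric.ball b.1 b.2, h y}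
  have key : ∀ b ∈ T, volume (Metric.ball b.1 b.2) ≤ t⁻¹ * ∫⁻ y in Metric.ball b.1 b.2, h y := by
    rintro b ⟨hb, hb2⟩
    have h0 : volume (Metric.ball b.1 b.2) ≠ 0 := (Metric.measure_ball_pos volume b.1 hb).ne'
    have h1 : volume (Metric.ball b.1 b.2) ≠ ⊤ := measure_ball_lt_top.ne
    rw [mul_comm, ← div_eq_mul_inv, ENNReal.le_div_iff_mul_le (Or.inl ht) (Or.inl ht')]
    rw [mul_comm _ (∫⁻ y in Metric.ball b.1 b.2, h y), ← div_eq_mul_inv,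
      ENNReal.lt_div_iff_mul_lt (Or.inl h0) (Or.inl h1)] at hb2
    rw [mul_comm]; exact hb2.le
  set v := volume (Metric.ball (0 : E) 1) with hv
  have hv0 : v ≠ 0 := (Metric.measure_ball_pos volume _ one_pos).ne'
  have hv1 : v ≠ ⊤ := measure_ball_lt_top.ne
  have hrad : ∀ b ∈ T, b.2 ≤ max 1 ((t⁻¹ * ∫⁻ y, h y) / v).toReal := by
    intro b hb
    by_cases hb1 : b.2 ≤ 1
    · exact le_max_of_le_left hb1
    · push Not at hb1
      apply le_max_of_le_right
      have h3 := (key b hb).trans (mul_le_mul_right (setLIntegral_le_lintegral _ _) _)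
      rw [Measure.addHaar_ball volume _ hb.1.le, finrank_euclideanSpace_fin] at h3
      have h4 : ENNReal.ofReal b.2 ≤ (t⁻¹ * ∫⁻ y, h y) / v := by
        rw [ENNReal.le_div_iff_mul_le (Or.inl hv0) (Or.inl hv1)]
        refine le_trans ?_ h3
        gcongr
        exact le_self_pow₀ hb1.le hd.ne'
      refine (ENNReal.ofReal_le_iff_le_toReal ?_).1 h4
      exact ENNReal.div_ne_top (ENNReal.mul_ne_top (ENNReal.inv_ne_top.2 ht) hI) hv0
  obtain ⟨u, huT, hdisj, hcov⟩ := Vitali.exists_disjoint_subfamily_covering_enlargement_closedBall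
    T (fun b => b.1) (fun b => b.2) _ hrad 5 (by norm_num)
  have hdisj' : u.PairwiseDisjoint fun b => Metric.ball b.1 b.2 := fun a ha b hb hab =>
    (hdisj ha hb hab).mono Metric.ball_subset_closedBall Metric.ball_subset_closedBall
  have hcount : u.Countable := hdisj'.countable_of_isOpen (fun _ _ => Metric.isOpen_ball)
    (fun b hb => Metric.nonempty_ball.2 (huT hb).1)
  have := hcount.to_subtype
  have hsub : {x | t < HLM h x} ⊆ ⋃ b ∈ u, Metric.closedBall b.1 (5 * b.2) := by
    intro x hx
    simp only [Set.mem_ofPred_eq, HLM, lt_iSup_iff] at hx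
    obtain ⟨b, hb, hb2⟩ := hx
    obtain ⟨c, hc, hc2⟩ := hcov b ⟨Metric.pos_of_mem_ball hb, hb2⟩
    exact Set.mem_biUnion hc (hc2 (Metric.ball_subset_closedBall hb))
  calc volume {x | t < HLM h x} ≤ volume (⋃ b ∈ u, Metric.closedBall b.1 (5 * b.2)) :=
        measure_mono hsub
    _ ≤ ∑' b : u, volume (Metric.closedBall b.1.1 (5 * b.1.2)) := measure_biUnion_le _ hcount _
    _ ≤ ∑' b : u, ENNReal.ofReal (5 ^ d) / t * ∫⁻ y in Metric.ball b.1.1 b.1.2, h y := by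
        refine ENNReal.tsum_le_tsum fun b => ?_
        rw [Measure.addHaar_closedBall_mul volume _ (by norm_num) (huT b.2).1.le,
          finrank_euclideanSpace_fin, Measure.addHaar_closedBall_eq_addHaar_ball, div_eq_mul_inv, mul_assoc]
        have := key _ (huT b.2)
        rw [Measure.addHaar_ball_center] at this
        gcongr
    _ = ENNReal.ofReal (5 ^ d) / t * ∫⁻ y in ⋃ b ∈ u, Metric.ball b.1 b.2, h y := by
        rw [ENNReal.tsum_mul_left, lintegral_biUnion hcount (fun _ _ => Metric.isOpen_ball.measurableSet) hdisj']
    _ ≤ _ := mul_le_mul_right (setLIntegral_le_lintegral _ _) _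

theorem HLM_strong {d : ℕ} (hd : 0 < d) (p : ℝ) (hp : 1 < p) : ∃ C : ℝ≥0∞, C ≠ ⊤ ∧
    ∀ h : EuclideanSpace ℝ (Fin d) → ℝ, Measurable h → (∀ x, 0 ≤ h x) →
    ∫⁻ x, ENNReal.ofReal (h x) ≠ ⊤ → (∃ B, ∀ x, h x ≤ B) →
    ∫⁻ x, HLM (fun x => ENNReal.ofReal (h x)) x ^ p ≤ C * ∫⁻ x, ENNReal.ofReal (h x) ^ p := by
  refine ⟨ENNReal.ofReal p * (ENNReal.ofReal (2 * 5 ^ d) * ((ENNReal.ofReal (p - 1))⁻¹ * ENNReal.ofReal (2 ^ (p - 1)))), ?_, ?_⟩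
  · have : (ENNReal.ofReal (p - 1))⁻¹ ≠ ⊤ := by
      simp; exact hp
    finiteness
  intro h hm h0 hI ⟨B, hB⟩
  set H := fun x => ENNReal.ofReal (h x) with hH
  have hHm : Measurable H := by fun_prop
  have hfin : ∀ x, HLM H x ≠ ⊤ := by
    intro x
    have := HLM_mono_add H (fun _ => 0) (ENNReal.ofReal B) (fun x => by
      simp only [zero_add, hH]; exact ENNReal.ofReal_le_ofReal (hB x)) x
    refine ne_top_of_le_ne_top ?_ this
    simp [HLM]
  let ν := (volume : Measure (EuclideanSpace ℝ (Fin d))).withDensity H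
  have e1 : ∫⁻ x, HLM H x ^ p = ∫⁻ x, ENNReal.ofReal ((HLM H x).toReal ^ p) := by
    congr 1; ext x
    rw [← ENNReal.ofReal_rpow_of_nonneg ENNReal.toReal_nonneg (by linarith), ENNReal.ofReal_toReal (hfin x)]
  rw [e1, lintegral_rpow_eq_lintegral_meas_lt_mul volume (Filter.Eventually.of_forall fun x => ENNReal.toReal_nonneg)
    (HLM_measurable H).ennreal_toReal.aemeasurable (by linarith)]
  have e2 := lintegral_rpow_eq_lintegral_meas_lt_mul ν (f := fun x => 2 * h x)
    (Filter.Eventually.of_forall fun x => mul_nonneg zero_le_two (h0 x)) (by fun_prop) (p := p - 1) (by linarith)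
  have e3 : ∫⁻ ω, ENNReal.ofReal ((2 * h ω) ^ (p - 1)) ∂ν = ENNReal.ofReal (2 ^ (p-1)) * ∫⁻ x, H x ^ p := by
    rw [lintegral_withDensity_eq_lintegral_mul _ hHm (by fun_prop), ← lintegral_const_mul _ (by fun_prop)]
    congr 1; ext x
    simp only [Pi.mul_apply, hH]
    rw [Real.mul_rpow zero_le_two (h0 x), ENNReal.ofReal_mul (by positivity), mul_left_comm,
      ENNReal.ofReal_rpow_of_nonneg (h0 x) (by linarith), ← ENNReal.ofReal_mul (h0 x)]
    congr 2
    rcases (h0 x).eq_or_lt with h | h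
    · rw [← h, Real.zero_rpow (by linarith), Real.zero_rpow (by linarith)]; simp
    · rw [← Real.rpow_one_add' (h0 x) (by linarith)]; congr 1; ring
  have hp1 : ENNReal.ofReal (p - 1) ≠ 0 := by simp; exact hp
  have e4 : ∫⁻ t in Set.Ioi (0:ℝ), ν {a | t < 2 * h a} * ENNReal.ofReal (t ^ (p - 1 - 1)) =
      (ENNReal.ofReal (p - 1))⁻¹ * (ENNReal.ofReal (2 ^ (p-1)) * ∫⁻ x, H x ^ p) := by
    rw [← e3, e2, ← mul_assoc, ENNReal.inv_mul_cancel hp1 ENNReal.ofReal_ne_top, one_mul]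
  simp only [mul_assoc]
  gcongr
  rw [← e4, ← lintegral_const_mul' _ _ ENNReal.ofReal_ne_top]
  refine setLIntegral_mono' measurableSet_Ioi fun t (ht : 0 < t) => ?_
  have w1 : volume {a | t < (HLM H a).toReal} ≤ ENNReal.ofReal (2 * 5 ^ d / t) * ν {a | t < 2 * h a} := by
    let k := {a | t < 2 * h a}.indicator H
    have hms : MeasurableSet {a | t < 2 * h a} := measurableSet_lt measurable_const (by fun_prop)
    have hk : ∀ x, H x ≤ k x + ENNReal.ofReal (t / 2) := by
      intro x
      by_cases hx : t < 2 * h x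
      · have : k x = H x := Set.indicator_of_mem (s := {a | t < 2 * h a}) hx H
        rw [this]; exact le_self_add
      · refine le_add_left ?_
        apply ENNReal.ofReal_le_ofReal
        linarith
    have hsub : {a | t < (HLM H a).toReal} ⊆ {a | ENNReal.ofReal (t / 2) < HLM k a} := by
      intro a (ha : t < (HLM H a).toReal)
      have h1 := HLM_mono_add H k _ hk a
      show ENNReal.ofReal (t / 2) < HLM k a
      by_contra hc
      push Not at hc
      have h2 : HLM H a ≤ ENNReal.ofReal t := by
        refine h1.trans ((add_le_add_left hc _).trans ?_)
        rw [← ENNReal.ofReal_add (by linarith) (by linarith)]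
        apply ENNReal.ofReal_le_ofReal; linarith
      have := ENNReal.toReal_le_of_le_ofReal ht.le h2
      linarith
    have hkI : ∫⁻ x, k x = ν {a | t < 2 * h a} := by
      rw [withDensity_apply _ hms, lintegral_indicator hms]
    refine (measure_mono hsub).trans ((HLM_weak hd k ?_ _ ?_ ENNReal.ofReal_ne_top).trans ?_)
    · rw [hkI, withDensity_apply _ hms]
      exact ne_top_of_le_ne_top hI (setLIntegral_le_lintegral _ _)
    · simp; exact ht
    · rw [hkI, ← ENNReal.ofReal_div_of_pos (by linarith)]
      apply le_of_eq; congr 2; field_simp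
  calc volume {a | t < (HLM H a).toReal} * ENNReal.ofReal (t ^ (p - 1)) ≤ 
    (ENNReal.ofReal (2 * 5 ^ d / t) * ν {a | t < 2 * h a}) * ENNReal.ofReal (t ^ (p - 1)) := by gcongr
    _ = (ENNReal.ofReal (2 * 5 ^ d / t) * ENNReal.ofReal (t ^ (p - 1))) * ν {a | t < 2 * h a} := by ring
    _ = (ENNReal.ofReal (2 * 5 ^ d) * ENNReal.ofReal (t ^ (p - 1 - 1))) * ν {a | t < 2 * h a} := by
      congr 1
      rw [← ENNReal.ofReal_mul (by positivity), ← ENNReal.ofReal_mul (by positivity), Real.rpow_sub_one ht.ne' (p-1)]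
      congr 1; field_simp
    _ = _ := by ring

theorem min_sum_lemma (α β : ℝ) (hα : 0 < α) (hαβ : α < β) : ∃ C : ℝ≥0∞, C ≠ ⊤ ∧
    ∀ (a b : ℝ≥0∞) (u : ℕ → ℝ≥0∞),
      (∀ j : ℕ, u j ≤ ENNReal.ofReal (2 ^ (-(j : ℝ) * α)) * a) →
      (∀ j : ℕ, u j ≤ ENNReal.ofReal (2 ^ ((j : ℝ) * (β - α))) * b) →
      ∑' j, u j ≤ C * (a ^ (1 - α / β) * b ^ (α / β)) := by
  set δ := min α (β - α) with hδ
  have hδ0 : 0 < δ := lt_min hα (by linarith)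
  have hβ : 0 < β := by linarith
  let F : ℤ → ℝ≥0∞ := fun k => ENNReal.ofReal (2 ^ (-δ * |(k : ℝ)|))
  have hF : ∑' k, F k ≠ ⊤ := by
    have hs : Summable fun k : ℤ => (2 : ℝ) ^ (-δ * |(k : ℝ)|) := by
      have hg : Summable fun n : ℕ => ((2 : ℝ) ^ (-δ)) ^ n :=
        summable_geometric_of_lt_one (by positivity) (Real.rpow_lt_one_of_one_lt_of_neg (by norm_num) (by linarith))
      apply Summable.of_nat_of_neg
      · refine hg.congr fun n => ?_
        rw [← Real.rpow_natCast, ← Real.rpow_mul (by norm_num)]; simp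
      · refine hg.congr fun n => ?_
        rw [← Real.rpow_natCast, ← Real.rpow_mul (by norm_num)]; simp
    exact hs.tsum_ofReal_ne_top
  refine ⟨ENNReal.ofReal (2 ^ β) * ∑' k, F k, ENNReal.mul_ne_top ENNReal.ofReal_ne_top hF, ?_⟩
  intro a b u h1 h2
  have hθ0 : 0 < α / β := by positivity
  have hθ1 : 0 < 1 - α / β := by rw [sub_pos, div_lt_one hβ]; exact hαβ
  have hzero : (a = 0 ∨ b = 0) → ∑' j, u j = 0 := by
    rintro (rfl | rfl)
    · simp only [mul_zero, nonpos_iff_eq_zero] at h1; simp [h1]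
    · simp only [mul_zero, nonpos_iff_eq_zero] at h2; simp [h2]
  rcases eq_or_ne a 0 with ha0 | ha0
  · rw [hzero (Or.inl ha0)]; simp
  rcases eq_or_ne b 0 with hb0 | hb0
  · rw [hzero (Or.inr hb0)]; simp
  have hFpos : ENNReal.ofReal (2 ^ β) * ∑' k, F k ≠ 0 := by
    refine mul_ne_zero (by simp; positivity) ?_
    intro h
    have := ENNReal.tsum_eq_zero.1 h 0
    simp [F] at this
  rcases eq_or_ne a ⊤ with rfl | ha
  · rw [ENNReal.top_rpow_of_pos hθ1, ENNReal.top_mul, ENNReal.mul_top hFpos]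
    · exact le_top
    · simp [ENNReal.rpow_eq_zero_iff, hb0, hθ0.le]
  rcases eq_or_ne b ⊤ with rfl | hb
  · rw [ENNReal.top_rpow_of_pos hθ0, ENNReal.mul_top, ENNReal.mul_top hFpos]
    · exact le_top
    · simp [ENNReal.rpow_eq_zero_iff, ha0, ha]
  obtain ⟨a', ha', rfl⟩ : ∃ a' : ℝ, 0 < a' ∧ a = ENNReal.ofReal a' :=
    ⟨a.toReal, ENNReal.toReal_pos ha0 ha, (ENNReal.ofReal_toReal ha).symm⟩
  obtain ⟨b', hb', rfl⟩ : ∃ b' : ℝ, 0 < b' ∧ b = ENNReal.ofReal b' :=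
    ⟨b.toReal, ENNReal.toReal_pos hb0 hb, (ENNReal.ofReal_toReal hb).symm⟩
  clear ha hb ha0 hb0 hzero
  rename' a' => a, b' => b
  have hb : 0 ≤ b := hb'.le
  -- t = 2^s with s real
  set s := Real.logb 2 (a / b) / β with hs
  have hab : a = b * 2 ^ (s * β) := by
    rw [hs, div_mul_cancel₀ _ hβ.ne', Real.rpow_logb (by norm_num) (by norm_num) (by positivity)]
    field_simp
  have hrhs : ENNReal.ofReal a ^ (1 - α / β) * ENNReal.ofReal b ^ (α / β) =
      ENNReal.ofReal (b * 2 ^ (s * (β - α))) := by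
    rw [ENNReal.ofReal_rpow_of_pos ha', ENNReal.ofReal_rpow_of_pos hb', ← ENNReal.ofReal_mul (by positivity)]
    congr 1
    rw [hab, Real.mul_rpow hb (by positivity), ← Real.rpow_mul (by norm_num), mul_right_comm,
      ← Real.rpow_add hb']
    have : s * β * (1 - α / β) = s * (β - α) := by field_simp
    rw [this]; simp
  rw [hrhs]
  set n := ⌊s⌋ with hn
  have hn1 : (n : ℝ) ≤ s := Int.floor_le s
  have hn2 : s < n + 1 := Int.lt_floor_add_one s
  have hterm : ∀ j : ℕ, u j ≤ ENNReal.ofReal (2 ^ β) * ENNReal.ofReal (b * 2 ^ (s * (β - α))) * F ((j : ℤ) - n) := by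
    intro j
    simp only [F]
    rw [← ENNReal.ofReal_mul (by positivity), ← ENNReal.ofReal_mul (by positivity)]
    push_cast
    rcases le_total (n : ℝ) j with hj | hj
    · refine (h1 j).trans ?_
      rw [← ENNReal.ofReal_mul (by positivity)]
      apply ENNReal.ofReal_le_ofReal
      rw [hab, abs_of_nonneg (by linarith)]
      have : (2:ℝ) ^ β * (b * 2 ^ (s * (β - α))) * 2 ^ (-δ * (↑j - ↑n)) = b * 2 ^ (β + s * (β - α) + -δ * (↑j - ↑n)) := by
        rw [Real.rpow_add (by norm_num), Real.rpow_add (by norm_num)]; ring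
      rw [this, mul_left_comm, ← Real.rpow_add (by norm_num)]
      refine mul_le_mul_of_nonneg_left (Real.rpow_le_rpow_of_exponent_le (by norm_num) ?_) hb
      · have : δ * (j - n) ≤ α * (j - n) := by
          refine mul_le_mul_of_nonneg_right (min_le_left _ _) (by linarith)
        nlinarith
    · refine (h2 j).trans ?_
      rw [← ENNReal.ofReal_mul (by positivity)]
      apply ENNReal.ofReal_le_ofReal
      rw [abs_of_nonpos (by linarith)]
      have : (2:ℝ) ^ β * (b * 2 ^ (s * (β - α))) * 2 ^ (-δ * -(↑j - ↑n)) = b * 2 ^ (β + s * (β - α) + -δ * -(↑j - ↑n)) := by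
        rw [Real.rpow_add (by norm_num), Real.rpow_add (by norm_num)]; ring
      rw [this, mul_comm]
      refine mul_le_mul_of_nonneg_left (Real.rpow_le_rpow_of_exponent_le (by norm_num) ?_) hb
      · have : δ * (n - j) ≤ (β - α) * (n - j) := by
          refine mul_le_mul_of_nonneg_right (min_le_right _ _) (by linarith)
        nlinarith
  calc ∑' j, u j ≤ ∑' j : ℕ, ENNReal.ofReal (2 ^ β) * ENNReal.ofReal (b * 2 ^ (s * (β - α))) * F ((j : ℤ) - n) :=
        ENNReal.tsum_le_tsum hterm
    _ = ENNReal.ofReal (2 ^ β) * ENNReal.ofReal (b * 2 ^ (s * (β - α))) * ∑' j : ℕ, F ((j : ℤ) - n) := ENNReal.tsum_mul_left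
    _ ≤ ENNReal.ofReal (2 ^ β) * ENNReal.ofReal (b * 2 ^ (s * (β - α))) * ∑' k, F k := by
        gcongr
        exact ENNReal.tsum_comp_le_tsum_of_injective (f := fun j : ℕ => (j : ℤ) - n) (fun x y h => by simpa using h) F
    _ = _ := by ring

theorem kernel_HLM (d : ℕ) : ∃ C : ℝ≥0∞, C ≠ ⊤ ∧
    ∀ (R : ℝ) (_ : 0 < R) (h : EuclideanSpace ℝ (Fin d) → ℝ≥0∞) (_ : Measurable h) (x),
    ∫⁻ y, ENNReal.ofReal (R ^ d * ((1 + R * ‖x - y‖) ^ (d + 1))⁻¹) * h y ≤ C * HLM h x := by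
  set v := volume (Metric.ball (0 : EuclideanSpace ℝ (Fin d)) 1) with hv
  have hv1 : v ≠ ⊤ := measure_ball_lt_top.ne
  have hG : ∑' k : ℕ, ENNReal.ofReal (2 ^ (d + 1) * (1 / 2) ^ k) ≠ ⊤ :=
    (summable_geometric_two.mul_left _).tsum_ofReal_ne_top
  refine ⟨(∑' k : ℕ, ENNReal.ofReal (2 ^ (d + 1) * (1 / 2) ^ k)) * v, ENNReal.mul_ne_top hG hv1, ?_⟩
  intro R hR h hm x
  have hpt : ∀ y, ENNReal.ofReal (R ^ d * ((1 + R * ‖x - y‖) ^ (d + 1))⁻¹) * h y ≤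
      ∑' k : ℕ, ENNReal.ofReal (R ^ d * (2 / 2 ^ k) ^ (d + 1)) *
        (Metric.ball x (2 ^ k / R)).indicator h y := by
    intro y
    have hs : 0 ≤ R * ‖x - y‖ := by positivity
    obtain ⟨n, hn1, hn2⟩ := exists_nat_pow_near (x := 1 + R * ‖x - y‖) (y := 2) (by linarith) (by norm_num)
    refine le_trans ?_ (ENNReal.le_tsum (n + 1))
    rw [Set.indicator_of_mem]
    · gcongr
      rw [← inv_pow]
      gcongr
      rw [inv_eq_one_div, div_le_div_iff₀ (by positivity) (by positivity)]
      rw [pow_succ]; linarith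
    · rw [Metric.mem_ball, dist_comm, dist_eq_norm, lt_div_iff₀ hR]
      linarith
  have hball : ∀ k : ℕ, ∫⁻ y in Metric.ball x (2 ^ k / R), h y ≤
      ENNReal.ofReal ((2 ^ k / R) ^ d) * v * HLM h x := by
    intro k
    have hr : 0 < 2 ^ k / R := by positivity
    have e : volume (Metric.ball x (2 ^ k / R)) = ENNReal.ofReal ((2 ^ k / R) ^ d) * v := by
      rw [Measure.addHaar_ball_of_pos volume _ hr, finrank_euclideanSpace_fin]
    have h0 : volume (Metric.ball x (2 ^ k / R)) ≠ 0 := (Metric.measure_ball_pos volume _ hr).ne'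
    have h1 : volume (Metric.ball x (2 ^ k / R)) ≠ ⊤ := measure_ball_lt_top.ne
    rw [← e]
    calc ∫⁻ y in Metric.ball x (2 ^ k / R), h y = volume (Metric.ball x (2 ^ k / R)) *
        ((volume (Metric.ball x (2 ^ k / R)))⁻¹ * ∫⁻ y in Metric.ball x (2 ^ k / R), h y) := by
          rw [← mul_assoc, ENNReal.mul_inv_cancel h0 h1, one_mul]
      _ ≤ _ := by
        gcongr
        exact le_iSup₂_of_le (f := fun (b : EuclideanSpace ℝ (Fin d) × ℝ) (_ : x ∈ Metric.ball b.1 b.2) => (volume (Metric.ball b.1 b.2))⁻¹ * ∫⁻ y in Metric.ball b.1 b.2, h y) (x, 2 ^ k / R) (Metric.mem_ball_self hr) le_rfl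
  calc _ ≤ ∫⁻ y, ∑' k : ℕ, ENNReal.ofReal (R ^ d * (2 / 2 ^ k) ^ (d + 1)) *
        (Metric.ball x (2 ^ k / R)).indicator h y := lintegral_mono hpt
    _ = ∑' k : ℕ, ENNReal.ofReal (R ^ d * (2 / 2 ^ k) ^ (d + 1)) * ∫⁻ y in Metric.ball x (2 ^ k / R), h y := by
        rw [lintegral_tsum]
        · congr 1; ext k
          rw [lintegral_const_mul _ (hm.indicator Metric.isOpen_ball.measurableSet),
            lintegral_indicator Metric.isOpen_ball.measurableSet]
        · intro k
          exact ((hm.indicator Metric.isOpen_ball.measurableSet).const_mul _).aemeasurable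
    _ ≤ ∑' k : ℕ, ENNReal.ofReal (R ^ d * (2 / 2 ^ k) ^ (d + 1)) * (ENNReal.ofReal ((2 ^ k / R) ^ d) * v * HLM h x) :=
        ENNReal.tsum_le_tsum fun k => mul_le_mul_right (hball k) _
    _ = ∑' k : ℕ, ENNReal.ofReal (2 ^ (d + 1) * (1 / 2) ^ k) * (v * HLM h x) := by
        congr 1; ext k
        rw [mul_assoc, ← mul_assoc, ← ENNReal.ofReal_mul (by positivity)]
        congr 2
        field_simp
        rw [one_div]
        simp only [div_pow, inv_pow]
        field_simp
        ring
    _ = _ := by rw [ENNReal.tsum_mul_right, mul_assoc]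

theorem kernel_decay (d : ℕ) (F : EuclideanSpace ℝ (Fin d) × ℝ → ℂ) (hF : ContDiff ℝ (⊤ : ℕ∞) F)
    (K : Set (EuclideanSpace ℝ (Fin d))) (hK : IsCompact K) (hFK : ∀ ξ ε, ξ ∉ K → F (ξ, ε) = 0) :
    ∃ C : ℝ, 0 ≤ C ∧ ∀ ε ∈ Set.Icc (0 : ℝ) 1, ∀ w,
      ‖𝓕⁻ (fun ξ => F (ξ, ε)) w‖ ≤ C * ((1 + ‖w‖) ^ (d + 1))⁻¹ := by
  have hB : ∀ n : ℕ, ∃ B : ℝ, ∀ z ∈ K ×ˢ Set.Icc (0 : ℝ) 1, ‖iteratedFDeriv ℝ n F z‖ ≤ B := fun n =>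
    (hK.prod isCompact_Icc).exists_bound_of_continuousOn
      (hF.continuous_iteratedFDeriv (by exact_mod_cast le_top)).continuousOn
  choose B hB using hB
  have hsm : ∀ ε : ℝ, ContDiff ℝ (⊤ : ℕ∞) (fun ξ => F (ξ, ε)) := fun ε => hF.comp (by fun_prop)
  have hder : ∀ n : ℕ, ∀ ε ∈ Set.Icc (0 : ℝ) 1, ∀ ξ,
      ‖iteratedFDeriv ℝ n (fun ξ => F (ξ, ε)) ξ‖ ≤ K.indicator (fun _ => B n) ξ := by
    intro n ε hε ξ
    by_cases hξ : ξ ∈ K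
    · rw [Set.indicator_of_mem hξ]
      have e : (fun ξ => F (ξ, ε)) = (fun z => F (z + (0, ε))) ∘
          (ContinuousLinearMap.inl ℝ (EuclideanSpace ℝ (Fin d)) ℝ) := by
        ext ξ; simp
      rw [e, ContinuousLinearMap.iteratedFDeriv_comp_right _ (n := (⊤ : ℕ∞)) (by exact hF.comp (by fun_prop)) _ (by exact_mod_cast le_top)]
      refine (ContinuousMultilinearMap.norm_compContinuousLinearMap_le _ _).trans ?_
      rw [iteratedFDeriv_comp_add_right]
      have h1 := hB n (ξ, ε) ⟨hξ, hε⟩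
      have h2 : ‖ContinuousLinearMap.inl ℝ (EuclideanSpace ℝ (Fin d)) ℝ‖ ≤ 1 :=
        ContinuousLinearMap.norm_inl_le_one ..
      simp only [ContinuousLinearMap.inl_apply, Prod.mk_add_mk, add_zero, zero_add, Finset.prod_const]
      calc _ ≤ B n * 1 := by
            gcongr
            · exact (norm_nonneg _).trans h1
            · exact pow_le_one₀ (norm_nonneg _) h2
        _ = _ := mul_one _
    · rw [Set.indicator_of_notMem hξ]
      have hts : tsupport (fun ξ => F (ξ, ε)) ⊆ K := by
        refine closure_minimal (fun z hz => ?_) hK.isClosed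
        by_contra hc
        exact hz (hFK z ε hc)
      have : iteratedFDeriv ℝ n (fun ξ => F (ξ, ε)) ξ = 0 := by
        by_contra hc
        exact hξ (hts (support_iteratedFDeriv_subset n hc))
      rw [this, norm_zero]
  have hKi : ∀ b : ℝ, Integrable (K.indicator (fun _ => b)) :=
    fun b => (integrable_indicator_iff hK.measurableSet).2 (integrableOn_const hK.measure_lt_top.ne)
  have hci : ∀ n : ℕ, ∀ ε, Continuous fun ξ => iteratedFDeriv ℝ n (fun ξ => F (ξ, ε)) ξ := fun n ε =>
    (hsm ε).continuous_iteratedFDeriv (by exact_mod_cast le_top)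
  have hint : ∀ n : ℕ, ∀ ε ∈ Set.Icc (0 : ℝ) 1,
      Integrable (fun ξ => ‖iteratedFDeriv ℝ n (fun ξ => F (ξ, ε)) ξ‖) := fun n ε hε =>
    (hKi (B n)).mono' (hci n ε).norm.aestronglyMeasurable (Filter.Eventually.of_forall fun ξ => by
      simpa using hder n ε hε ξ)
  let D : ℕ → ℝ := fun n => 2 ^ n * ∑ m ∈ Finset.range (n + 1), ∫ ξ, K.indicator (fun _ => B m) ξ
  have hD : ∀ n : ℕ, ∀ ε ∈ Set.Icc (0 : ℝ) 1, ∀ w, ‖w‖ ^ n * ‖𝓕 (fun ξ => F (ξ, ε)) w‖ ≤ D n := by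
    intro n ε hε w
    have := Real.pow_mul_norm_iteratedFDeriv_fourier_le (K := 0) (N := (⊤ : ℕ∞)) (hsm ε) (fun k n hk _ => by
      have hk0 : k = 0 := by simpa using hk
      subst hk0
      simpa using hint n ε hε) (k := 0) (n := n) (by simp) (by exact_mod_cast le_top) w
    simp only [norm_iteratedFDeriv_zero] at this
    refine this.trans ?_
    simp only [D, Finset.sum_product, zero_add, Finset.range_one, Finset.sum_singleton, pow_zero, one_mul, Nat.cast_zero, mul_zero]
    gcongr with m hm
    · exact hint m ε hε
    · exact hKi _
    · exact fun ξ => hder m ε hε ξ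
  have h01 : (0:ℝ) ∈ Set.Icc (0:ℝ) 1 := by simp
  have hDn : ∀ n, 0 ≤ D n := fun n => le_trans (by positivity) (hD n 0 h01 0)
  refine ⟨2 ^ d * (D 0 + D (d + 1)), by have := hDn 0; have := hDn (d+1); positivity, ?_⟩
  intro ε hε w
  rw [Real.fourierInv_eq_fourier_neg, ← div_eq_mul_inv, le_div_iff₀ (by positivity)]
  have h1 := hD 0 ε hε (-w)
  have h2 := hD (d + 1) ε hε (-w)
  rw [norm_neg] at h1 h2
  have h3 : (1 + ‖w‖) ^ (d + 1) ≤ 2 ^ d * (1 ^ (d + 1) + ‖w‖ ^ (d + 1)) :=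
    add_pow_le zero_le_one (norm_nonneg w) (d + 1)
  calc _ ≤ ‖𝓕 (fun ξ => F (ξ, ε)) (-w)‖ * (2 ^ d * (1 ^ (d + 1) + ‖w‖ ^ (d + 1))) := by gcongr
    _ = 2 ^ d * (‖w‖ ^ 0 * ‖𝓕 (fun ξ => F (ξ, ε)) (-w)‖ + ‖w‖ ^ (d + 1) * ‖𝓕 (fun ξ => F (ξ, ε)) (-w)‖) := by ring
    _ ≤ _ := by gcongr

theorem conv_formula {d : ℕ} (m : EuclideanSpace ℝ (Fin d) → ℂ) (hm : Continuous m)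
    (hmc : HasCompactSupport m) (g : EuclideanSpace ℝ (Fin d) → ℂ) (hg : Integrable g)
    (R : ℝ) (hR : 0 < R) (x : EuclideanSpace ℝ (Fin d)) :
    𝓕⁻ (fun ξ => m (R⁻¹ • ξ) * 𝓕 g ξ) x = ∫ y, g y * ((R ^ d : ℝ) • 𝓕⁻ m (R • (x - y))) := by
  let G : EuclideanSpace ℝ (Fin d) → ℂ := fun ξ => Real.fourierChar (inner ℝ ξ x) • m (R⁻¹ • ξ)
  have hmi : Integrable (fun ξ => m (R⁻¹ • ξ)) := by
    have : Integrable m := hm.integrable_of_hasCompactSupport hmc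
    exact this.comp_smul (inv_pos.2 hR).ne'
  have hGi : Integrable G := by
    refine hmi.norm.mono' ?_ (Filter.Eventually.of_forall fun ξ => ?_)
    swap
    · simp only [G, Circle.norm_smul]
      exact le_rfl
    · apply Continuous.aestronglyMeasurable
      fun_prop
  have hflip : ∫ ξ, 𝓕 g ξ • G ξ = ∫ y, g y • 𝓕 G y := by
    simpa using! (VectorFourier.integral_fourierIntegral_smul_eq_flip
      (L := innerₗ (EuclideanSpace ℝ (Fin d)))
      Real.continuous_fourierChar continuous_inner hg hGi)
  have hGF : ∀ y, 𝓕 G y = (R ^ d : ℝ) • 𝓕⁻ m (R • (x - y)) := by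
    intro y
    have := Measure.integral_comp_inv_smul_of_nonneg volume
      (fun ζ : EuclideanSpace ℝ (Fin d) => Real.fourierChar (inner ℝ ζ (R • (x - y))) • m ζ) hR.le
    rw [finrank_euclideanSpace_fin] at this
    rw [Real.fourierInv_eq, ← this, Real.fourier_eq]
    congr 1; ext ξ
    simp only [G]
    rw [smul_smul, ← AddChar.map_add_eq_mul]
    congr 2
    rw [inner_smul_left, inner_smul_right, inner_sub_right]
    simp only [conj_trivial]
    field_simp
    ring
  rw [Real.fourierInv_eq]
  simp only [smul_eq_mul, hGF] at hflip
  rw [← hflip]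
  congr 1; ext ξ
  simp only [G, Circle.smul_def, smul_eq_mul]
  ring

theorem block_bound (d : ℕ) (F : EuclideanSpace ℝ (Fin d) × ℝ → ℂ) (hF : ContDiff ℝ (⊤ : ℕ∞) F)
    (K : Set (EuclideanSpace ℝ (Fin d))) (hK : IsCompact K) (hFK : ∀ ξ ε, ξ ∉ K → F (ξ, ε) = 0) :
    ∃ C : ℝ≥0∞, C ≠ ⊤ ∧ ∀ ε ∈ Set.Icc (0 : ℝ) 1, ∀ R : ℝ, 0 < R →
      ∀ g : EuclideanSpace ℝ (Fin d) → ℂ, Continuous g → Integrable g → ∀ x,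
      ‖𝓕⁻ (fun ξ => F (R⁻¹ • ξ, ε) * 𝓕 g ξ) x‖ₑ ≤ C * HLM (fun y => ENNReal.ofReal ‖g y‖) x := by
  obtain ⟨C₁, hC₁, h1⟩ := kernel_decay d F hF K hK hFK
  obtain ⟨C₂, hC₂, h2⟩ := kernel_HLM d
  refine ⟨ENNReal.ofReal C₁ * C₂, ENNReal.mul_ne_top ENNReal.ofReal_ne_top hC₂, ?_⟩
  intro ε hε R hR g hgc hg x
  rw [conv_formula (fun ξ => F (ξ, ε)) (hF.continuous.comp (by fun_prop))
    (HasCompactSupport.intro hK fun ξ hξ => hFK ξ ε hξ) g hg R hR x]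
  refine (enorm_integral_le_lintegral_enorm _).trans ?_
  rw [mul_assoc]
  refine le_trans ?_ (mul_le_mul_right (h2 R hR (fun y => ENNReal.ofReal ‖g y‖) (by fun_prop) x) _)
  rw [← lintegral_const_mul' _ _ ENNReal.ofReal_ne_top]
  refine lintegral_mono fun y => ?_
  rw [← ofReal_norm, ← ENNReal.ofReal_mul (by positivity), ← ENNReal.ofReal_mul (by positivity)]
  apply ENNReal.ofReal_le_ofReal
  rw [norm_mul, norm_smul, Real.norm_of_nonneg (by positivity)]
  have := h1 ε hε (R • (x - y))
  rw [norm_smul, Real.norm_of_nonneg hR.le] at this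
  calc _ ≤ ‖g y‖ * (R ^ d * (C₁ * ((1 + R * ‖x - y‖) ^ (d + 1))⁻¹)) := by gcongr
    _ = _ := by ring

theorem symbol_smooth {d : ℕ} (α : ℝ) (ψ : EuclideanSpace ℝ (Fin d) → ℝ)
    (hψ : ContDiff ℝ (⊤ : ℕ∞) ψ) (hψ0 : ∀ ξ, ‖ξ‖ ≤ 1 / 2 → ψ ξ = 0) :
    ContDiff ℝ (⊤ : ℕ∞) (fun z : EuclideanSpace ℝ (Fin d) × ℝ =>
      ((ψ z.1 * (z.2 ^ 2 + ‖z.1‖ ^ 2) ^ (-(α / 2)) : ℝ) : ℂ)) := by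
  refine Complex.ofRealCLM.contDiff.comp ?_
  rw [contDiff_iff_contDiffAt]
  rintro ⟨ξ, ε⟩
  by_cases h : ‖ξ‖ < 1 / 2
  · have : (fun z : EuclideanSpace ℝ (Fin d) × ℝ => ψ z.1 * (z.2 ^ 2 + ‖z.1‖ ^ 2) ^ (-(α / 2)))
        =ᶠ[nhds (ξ, ε)] fun _ => 0 := by
      have ho : IsOpen {z : EuclideanSpace ℝ (Fin d) × ℝ | ‖z.1‖ < 1 / 2} :=
        isOpen_lt (by fun_prop) continuous_const
      filter_upwards [ho.mem_nhds h] with z hz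
      rw [hψ0 _ (le_of_lt hz), zero_mul]
    exact contDiffAt_const.congr_of_eventuallyEq this
  · refine (hψ.comp contDiff_fst).contDiffAt.mul (ContDiffAt.rpow_const_of_ne ?_ ?_)
    · exact ((contDiff_snd.pow 2).add (contDiff_fst.norm_sq ℝ)).contDiffAt
    · have : 0 < ‖ξ‖ := by linarith
      positivity

theorem finv_integrable {d : ℕ} (u : EuclideanSpace ℝ (Fin d) → ℂ) (hu : Integrable u)
    (x : EuclideanSpace ℝ (Fin d)) :
    Integrable (fun ξ => Real.fourierChar (inner ℝ ξ x) • u ξ) := by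
  have h := hu.bdd_mul (c := 1) (f := fun ξ => ((Real.fourierChar (inner ℝ ξ x) : Circle) : ℂ))
    (by apply Continuous.aestronglyMeasurable; fun_prop)
    (Filter.Eventually.of_forall fun ξ => (Circle.norm_coe _).le)
  exact h

theorem finv_add {d : ℕ} (u v : EuclideanSpace ℝ (Fin d) → ℂ) (hu : Integrable u)
    (hv : Integrable v) (x : EuclideanSpace ℝ (Fin d)) :
    𝓕⁻ u x + 𝓕⁻ v x = 𝓕⁻ (fun ξ => u ξ + v ξ) x := by
  simp only [Real.fourierInv_eq, smul_add]
  rw [integral_add (finv_integrable u hu x) (finv_integrable v hv x)]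

theorem mult_integrable {d : ℕ} (φ : EuclideanSpace ℝ (Fin d) → ℝ) (hφ : Continuous φ)
    (hφs : HasCompactSupport φ) (v : EuclideanSpace ℝ (Fin d) → ℂ) (hv : Integrable v) (c : ℝ) :
    Integrable (fun ξ => (φ (c • ξ) : ℂ) * v ξ) := by
  obtain ⟨B, hB⟩ := hφs.exists_bound_of_continuous hφ
  exact hv.bdd_mul (c := B) (f := fun ξ => (φ (c • ξ) : ℂ))
    (by apply Continuous.aestronglyMeasurable; fun_prop)
    (Filter.Eventually.of_forall fun ξ => by simpa using hB (c • ξ))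

theorem LP_partial {d : ℕ} (φ : EuclideanSpace ℝ (Fin d) → ℝ) (hφ : Continuous φ)
    (hφs : HasCompactSupport φ) (f : EuclideanSpace ℝ (Fin d) → ℂ) (hf : Integrable (𝓕 f)) (x)
    (N : ℕ) : ∑ j ∈ Finset.range (N + 1), LPblock φ j f x =
      𝓕⁻ (fun ξ => (φ ((2 : ℝ) ^ (-(N : ℝ)) • ξ) : ℂ) * 𝓕 f ξ) x := by
  induction N with
  | zero => simp [LPblock]
  | succ N ih =>
    rw [Finset.sum_range_succ, ih]
    have e : LPblock φ (N + 1) f = 𝓕⁻ (fun ξ => (φ ((2 : ℝ) ^ (-((N + 1 : ℕ) : ℝ)) • ξ) : ℂ) * 𝓕 f ξ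
        - (φ ((2 : ℝ) ^ (-(N : ℝ)) • ξ) : ℂ) * 𝓕 f ξ) := by
      have e2 : -((N + 1 : ℕ) : ℝ) + 1 = -(N : ℝ) := by push_cast; ring
      simp only [LPblock, Nat.succ_ne_zero, if_false, e2]
      congr 1; ext ξ
      push_cast; ring
    have i1 := mult_integrable φ hφ hφs _ hf ((2 : ℝ) ^ (-(N : ℝ)))
    have i2 := mult_integrable φ hφ hφs _ hf ((2 : ℝ) ^ (-((N + 1 : ℕ) : ℝ)))
    rw [e, finv_add _ (fun ξ => (φ ((2 : ℝ) ^ (-((N + 1 : ℕ) : ℝ)) • ξ) : ℂ) * 𝓕 f ξ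
        - (φ ((2 : ℝ) ^ (-(N : ℝ)) • ξ) : ℂ) * 𝓕 f ξ) i1 (i2.sub i1)]
    refine congrArg (fun u : EuclideanSpace ℝ (Fin d) → ℂ => 𝓕⁻ u x) ?_
    ext ξ; ring

theorem LP_sum {d : ℕ} (φ : EuclideanSpace ℝ (Fin d) → ℝ) (hφ : Continuous φ)
    (hφs : HasCompactSupport φ) (hφ_one : ∀ ξ, ‖ξ‖ ≤ 1 → φ ξ = 1)
    (f : SchwartzMap (EuclideanSpace ℝ (Fin d)) ℂ) (x) :
    ‖f x‖ₑ ≤ ∑' j, ‖LPblock φ j f x‖ₑ := by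
  have hf : Integrable (𝓕 (f : EuclideanSpace ℝ (Fin d) → ℂ)) := (𝓕 f).integrable
  obtain ⟨B, hB⟩ := hφs.exists_bound_of_continuous hφ
  have hc : Filter.Tendsto (fun N : ℕ => (2 : ℝ) ^ (-(N : ℝ))) Filter.atTop (nhds 0) := by
    have := tendsto_pow_atTop_nhds_zero_of_lt_one (r := (1/2 : ℝ)) (by norm_num) (by norm_num)
    refine this.congr fun N => ?_
    rw [Real.rpow_neg (by norm_num), Real.rpow_natCast]; simp
  have h1 : Filter.Tendsto (fun N : ℕ => 𝓕⁻ (fun ξ => (φ ((2 : ℝ) ^ (-(N : ℝ)) • ξ) : ℂ) * 𝓕 f ξ) x)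
      Filter.atTop (nhds (f x)) := by
    have e : f x = 𝓕⁻ (𝓕 (f : EuclideanSpace ℝ (Fin d) → ℂ)) x := by
      rw [f.continuous.fourierInv_fourier_eq f.integrable hf]
    rw [e]
    simp only [Real.fourierInv_eq]
    refine tendsto_integral_of_dominated_convergence (fun ξ => B * ‖𝓕 f ξ‖) ?_ (hf.norm.const_mul B) ?_ ?_
    · intro N
      exact (finv_integrable _ (mult_integrable φ hφ hφs _ hf _) x).aestronglyMeasurable
    · intro N
      refine Filter.Eventually.of_forall fun ξ => ?_
      rw [Circle.norm_smul, norm_mul]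
      gcongr
      · simpa using hB _
    · refine Filter.Eventually.of_forall fun ξ => ?_
      have : ∀ᶠ N : ℕ in Filter.atTop, ‖(2 : ℝ) ^ (-(N : ℝ)) • ξ‖ < 1 := by
        have h2 : Filter.Tendsto (fun N : ℕ => ‖(2 : ℝ) ^ (-(N : ℝ)) • ξ‖) Filter.atTop (nhds 0) := by
          simpa using (hc.smul_const ξ).norm
        exact h2.eventually_lt_const one_pos
      refine tendsto_const_nhds.congr' ?_
      filter_upwards [this] with N hN
      rw [hφ_one _ hN.le]; simp [SchwartzMap.fourier_coe]
  refine le_of_tendsto h1.enorm (Filter.Eventually.of_forall fun N => ?_)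
  have := LP_partial φ hφ hφs f hf x N
  rw [SchwartzMap.fourier_coe, ← this]
  exact (enorm_sum_le _ _).trans (ENNReal.sum_le_tsum _)


/-- Gérard–Meyer–Oru improved Sobolev inequality (nonhomogeneous version): for
`0 < α < β`, `1 < p < ∞` and `p/q = 1 - α/β`,
`‖f‖_{L^q} ≤ C ‖f‖_{W^{α,p}}^{1-α/β} ‖f‖_{B^{α-β,∞}_∞}^{α/β}`. -/
theorem stmt_11 (d : ℕ) (hd : 0 < d) (α β p q : ℝ)
    (hα : 0 < α) (hαβ : α < β) (hp : 1 < p) (hq : p / q = 1 - α / β)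
    (φ : EuclideanSpace ℝ (Fin d) → ℝ) (hφ_smooth : ContDiff ℝ (⊤ : ℕ∞) φ)
    (hφ_supp : HasCompactSupport φ) (hφ_one : ∀ ξ, ‖ξ‖ ≤ 1 → φ ξ = 1) :
    ∃ C : ℝ, 0 < C ∧ ∀ f : SchwartzMap (EuclideanSpace ℝ (Fin d)) ℂ,
      eLpNorm ⇑f (ENNReal.ofReal q) volume ≤
        ENNReal.ofReal C * (besselNorm α p ⇑f) ^ (1 - α / β) *
          (besovNorm φ (α - β) ⊤ ⇑f) ^ (α / β) := by
  have hβ : 0 < β := by linarith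
  have hθ0 : 0 < α / β := by positivity
  have hθ1 : 0 < 1 - α / β := by rw [sub_pos, div_lt_one hβ]; exact hαβ
  have hq0 : 0 < q := by
    by_contra hc
    have : p / q ≤ 0 := div_nonpos_of_nonneg_of_nonpos (by linarith) (by linarith)
    linarith
  have hφc : Continuous φ := hφ_smooth.continuous
  let ψ : EuclideanSpace ℝ (Fin d) → ℝ := fun ξ => φ ξ - φ ((2 : ℝ) • ξ)
  have hψs : ContDiff ℝ (⊤ : ℕ∞) ψ := hφ_smooth.sub (hφ_smooth.comp (contDiff_const_smul 2))
  have hψ0 : ∀ ξ, ‖ξ‖ ≤ 1 / 2 → ψ ξ = 0 := by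
    intro ξ hξ
    have h1 := hφ_one ξ (by linarith)
    have h2 := hφ_one ((2 : ℝ) • ξ) (by rw [norm_smul]; norm_num; linarith)
    simp only [ψ, h1, h2, sub_self]
  have hψK : HasCompactSupport ψ := hφ_supp.sub (hφ_supp.comp_smul two_ne_zero)
  obtain ⟨C₁, hC₁, hblk⟩ := block_bound d _ (symbol_smooth α ψ hψs hψ0) (tsupport ψ) hψK
    (fun ξ ε hξ => by simp [image_eq_zero_of_notMem_tsupport hξ])
  have hF0 : ContDiff ℝ (⊤ : ℕ∞) (fun z : EuclideanSpace ℝ (Fin d) × ℝ =>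
      ((φ z.1 * (1 + ‖z.1‖ ^ 2) ^ (-(α / 2)) : ℝ) : ℂ)) := by
    refine Complex.ofRealCLM.contDiff.comp ?_
    refine (hφ_smooth.comp contDiff_fst).mul (ContDiff.rpow_const_of_ne ?_ fun z => by positivity)
    exact contDiff_const.add (contDiff_fst.norm_sq ℝ)
  obtain ⟨C₀, hC₀, hblk0⟩ := block_bound d _ hF0 (tsupport φ) hφ_supp
    (fun ξ ε hξ => by simp [image_eq_zero_of_notMem_tsupport hξ])
  obtain ⟨C₃, hC₃, hmin⟩ := min_sum_lemma α β hα hαβ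
  obtain ⟨C₄, hC₄, hHL⟩ := HLM_strong hd p hp
  have hCC : C₃ * (C₀ + C₁) ^ (1 - α / β) * C₄ ^ (1 / q) ≠ ⊤ := by
    refine ENNReal.mul_ne_top (ENNReal.mul_ne_top hC₃ ?_) ?_
    · exact ENNReal.rpow_ne_top_of_nonneg hθ1.le (ENNReal.add_ne_top.2 ⟨hC₀, hC₁⟩)
    · exact ENNReal.rpow_ne_top_of_nonneg (by positivity) hC₄
  refine ⟨(C₃ * (C₀ + C₁) ^ (1 - α / β) * C₄ ^ (1 / q)).toReal + 1, by positivity, ?_⟩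
  intro f
  -- the Bessel potential
  have htg : (fun ξ : EuclideanSpace ℝ (Fin d) => (((1 + ‖ξ‖ ^ 2) ^ (α / 2) : ℝ) : ℂ)).HasTemperateGrowth := by
    fun_prop
  let G : SchwartzMap (EuclideanSpace ℝ (Fin d)) ℂ := SchwartzMap.smulLeftCLM ℂ
    (fun ξ : EuclideanSpace ℝ (Fin d) => (((1 + ‖ξ‖ ^ 2) ^ (α / 2) : ℝ) : ℂ)) (𝓕 f)
  let g : SchwartzMap (EuclideanSpace ℝ (Fin d)) ℂ := 𝓕⁻ G
  have hG : ∀ ξ, G ξ = (((1 + ‖ξ‖ ^ 2) ^ (α / 2) : ℝ) : ℂ) * 𝓕 (f : EuclideanSpace ℝ (Fin d) → ℂ) ξ := by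
    intro ξ
    simp only [G]
    rw [SchwartzMap.smulLeftCLM_apply_apply htg, smul_eq_mul, SchwartzMap.fourier_coe]
  have hgf : (g : EuclideanSpace ℝ (Fin d) → ℂ) =
      𝓕⁻ fun ξ => (((1 + ‖ξ‖ ^ 2) ^ (α / 2) : ℝ) : ℂ) * 𝓕 (f : EuclideanSpace ℝ (Fin d) → ℂ) ξ := by
    have : (g : EuclideanSpace ℝ (Fin d) → ℂ) = 𝓕⁻ (G : EuclideanSpace ℝ (Fin d) → ℂ) :=
      SchwartzMap.fourierInv_coe G
    rw [this]
    congr 1; ext ξ; exact hG ξ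
  have hFg : ∀ ξ, 𝓕 (g : EuclideanSpace ℝ (Fin d) → ℂ) ξ = G ξ := by
    intro ξ
    have : 𝓕 g = G := FourierTransform.fourier_fourierInv_eq G
    rw [← this, SchwartzMap.fourier_coe]
  have hff : ∀ ξ, 𝓕 (f : EuclideanSpace ℝ (Fin d) → ℂ) ξ =
      (((1 + ‖ξ‖ ^ 2) ^ (-(α / 2)) : ℝ) : ℂ) * 𝓕 (g : EuclideanSpace ℝ (Fin d) → ℂ) ξ := by
    intro ξ
    rw [hFg, hG, ← mul_assoc, ← Complex.ofReal_mul, ← Real.rpow_add (by positivity)]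
    simp
  let M := HLM (fun y => ENNReal.ofReal ‖g y‖)
  have hMm : Measurable M := HLM_measurable _
  set A := besselNorm α p f with hA
  set B := besovNorm φ (α - β) ⊤ f with hBdef
  have hu1 : ∀ x (j : ℕ), ‖LPblock φ j f x‖ₑ ≤ ENNReal.ofReal (2 ^ (-(j : ℝ) * α)) * ((C₀ + C₁) * M x) := by
    intro x j
    rcases Nat.eq_zero_or_pos j with rfl | hj
    · have h := hblk0 0 (by simp) 1 one_pos g g.continuous g.integrable x
      have e : LPblock φ 0 f = 𝓕⁻ (fun ξ => (fun z : EuclideanSpace ℝ (Fin d) × ℝ =>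
          ((φ z.1 * (1 + ‖z.1‖ ^ 2) ^ (-(α / 2)) : ℝ) : ℂ)) ((1 : ℝ)⁻¹ • ξ, (0 : ℝ)) *
            𝓕 (g : EuclideanSpace ℝ (Fin d) → ℂ) ξ) := by
        simp only [LPblock, if_true]
        congr 1; ext ξ
        rw [hff ξ]
        simp only [inv_one, one_smul]
        push_cast; ring
      rw [e]
      refine h.trans ?_
      simp only [Nat.cast_zero, neg_zero, zero_mul, Real.rpow_zero, ENNReal.ofReal_one, one_mul]
      gcongr
      exact le_self_add
    · set R : ℝ := 2 ^ (j : ℝ) with hR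
      have hR0 : 0 < R := by positivity
      have hR1 : 1 ≤ R := Real.one_le_rpow (by norm_num) (by positivity)
      have h := hblk R⁻¹ ⟨by positivity, inv_le_one_of_one_le₀ hR1⟩ R hR0 g g.continuous g.integrable x
      have hRi : (2 : ℝ) ^ (-(j : ℝ)) = R⁻¹ := Real.rpow_neg (by norm_num) _
      have hRi2 : (2 : ℝ) ^ (-(j : ℝ) + 1) = 2 * R⁻¹ := by
        rw [Real.rpow_add (by norm_num), hRi, Real.rpow_one, mul_comm]
      have e : LPblock φ j f = 𝓕⁻ (fun ξ => ((2 ^ (-(j : ℝ) * α) : ℝ) : ℂ) •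
          ((fun z : EuclideanSpace ℝ (Fin d) × ℝ =>
          ((ψ z.1 * (z.2 ^ 2 + ‖z.1‖ ^ 2) ^ (-(α / 2)) : ℝ) : ℂ)) (R⁻¹ • ξ, R⁻¹) *
            𝓕 (g : EuclideanSpace ℝ (Fin d) → ℂ) ξ)) := by
        simp only [LPblock, hj.ne', if_false]
        congr 1; ext ξ
        rw [hff ξ, hRi, hRi2, ← smul_smul]
        have e3 : (1 + ‖ξ‖ ^ 2) ^ (-(α / 2)) = 2 ^ (-(j : ℝ) * α) *
            ((R⁻¹) ^ 2 + ‖R⁻¹ • ξ‖ ^ 2) ^ (-(α / 2)) := by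
          have e4 : (R⁻¹) ^ 2 + ‖R⁻¹ • ξ‖ ^ 2 = (R⁻¹) ^ 2 * (1 + ‖ξ‖ ^ 2) := by
            rw [norm_smul, Real.norm_of_nonneg (by positivity)]; ring
          rw [e4, Real.mul_rpow (by positivity) (by positivity), ← hRi,
            ← Real.rpow_natCast ((2 : ℝ) ^ (-(j : ℝ))) 2,
            ← Real.rpow_mul (by norm_num), ← Real.rpow_mul (by norm_num), ← mul_assoc,
            ← Real.rpow_add (by norm_num)]
          have : -(j : ℝ) * α + -(j : ℝ) * (((2 : ℕ) : ℝ) * -(α / 2)) = 0 := by push_cast; ring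
          rw [this]; simp
        rw [e3]
        simp only [ψ, smul_eq_mul]
        push_cast; ring
      have e5 : ∀ u : EuclideanSpace ℝ (Fin d) → ℂ, ∀ c : ℂ, 𝓕⁻ (fun ξ => c • u ξ) x = c • 𝓕⁻ u x := by
        intro u c
        simp only [Real.fourierInv_eq]
        rw [← integral_smul]
        congr 1; ext ξ
        rw [smul_comm]
      rw [e, e5, enorm_smul]
      have e6 : ‖((2 ^ (-(j : ℝ) * α) : ℝ) : ℂ)‖ₑ = ENNReal.ofReal (2 ^ (-(j : ℝ) * α)) := by
        rw [← ofReal_norm, Complex.norm_real, Real.norm_of_nonneg (by positivity)]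
      rw [e6]
      gcongr
      refine h.trans ?_
      gcongr
      exact le_add_self
  have hu2 : ∀ᵐ x : EuclideanSpace ℝ (Fin d), ∀ j : ℕ,
      ‖LPblock φ j f x‖ₑ ≤ ENNReal.ofReal (2 ^ ((j : ℝ) * (β - α))) * B := by
    rw [ae_all_iff]
    intro j
    have h1 := ae_le_eLpNormEssSup (f := LPblock φ j f) (μ := volume)
    filter_upwards [h1] with x hx
    rw [← eLpNorm_exponent_top] at hx
    have h2 : ENNReal.ofReal ((2 : ℝ) ^ (((j : ℝ) - 1) * (α - β))) * eLpNorm (LPblock φ j f) ⊤ volume ≤ B :=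
      le_iSup (fun j : ℕ => ENNReal.ofReal ((2 : ℝ) ^ (((j : ℝ) - 1) * (α - β))) * eLpNorm (LPblock φ j f) ⊤ volume) j
    calc ‖LPblock φ j f x‖ₑ ≤ eLpNorm (LPblock φ j f) ⊤ volume := hx
      _ = 1 * eLpNorm (LPblock φ j f) ⊤ volume := (one_mul _).symm
      _ ≤ ENNReal.ofReal (2 ^ ((j : ℝ) * (β - α))) * ENNReal.ofReal ((2 : ℝ) ^ (((j : ℝ) - 1) * (α - β))) *
          eLpNorm (LPblock φ j f) ⊤ volume := by
        gcongr
        rw [← ENNReal.ofReal_mul (by positivity), ← Real.rpow_add (by norm_num), ENNReal.one_le_ofReal]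
        apply Real.one_le_rpow (by norm_num)
        nlinarith
      _ ≤ _ := by rw [mul_assoc]; gcongr
  have hpt : ∀ᵐ x : EuclideanSpace ℝ (Fin d), ‖f x‖ₑ ≤
      C₃ * (((C₀ + C₁) * M x) ^ (1 - α / β) * B ^ (α / β)) := by
    filter_upwards [hu2] with x hx
    exact (LP_sum φ hφc hφ_supp hφ_one f x).trans (hmin _ _ _ (hu1 x) hx)
  have hqtop : ENNReal.ofReal q ≠ ⊤ := ENNReal.ofReal_ne_top
  have hqz : ENNReal.ofReal q ≠ 0 := by simpa using hq0
  have hpz : ENNReal.ofReal p ≠ 0 := by simp; linarith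
  have hqp : (1 - α / β) * q = p := by rw [← hq]; field_simp
  have hA2 : A ^ (1 - α / β) = (∫⁻ x, ENNReal.ofReal ‖g x‖ ^ p) ^ (1 / q) := by
    rw [hA, besselNorm, ← hgf, eLpNorm_eq_lintegral_rpow_enorm_toReal hpz ENNReal.ofReal_ne_top,
      ENNReal.toReal_ofReal (by linarith), ← ENNReal.rpow_mul]
    simp only [ofReal_norm]
    congr 1
    rw [← hq]; field_simp
  have hHLg := hHL (fun x => ‖g x‖) g.continuous.norm.measurable (fun x => norm_nonneg _) (by
      have := g.integrable (μ := volume)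
      have h2 := this.2
      simp only [hasFiniteIntegral_iff_norm] at h2
      exact h2.ne) ⟨SchwartzMap.seminorm ℝ 0 0 g, fun x => SchwartzMap.norm_le_seminorm ℝ g x⟩
  set D := C₃ * (C₀ + C₁) ^ (1 - α / β) * B ^ (α / β) with hD
  rw [eLpNorm_eq_lintegral_rpow_enorm_toReal hqz hqtop, ENNReal.toReal_ofReal hq0.le]
  calc (∫⁻ x, ‖f x‖ₑ ^ q) ^ (1 / q) ≤ (∫⁻ x, D ^ q * M x ^ p) ^ (1 / q) := by
        gcongr ?_ ^ _
        refine lintegral_mono_ae ?_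
        filter_upwards [hpt] with x hx
        calc ‖f x‖ₑ ^ q ≤ (C₃ * (((C₀ + C₁) * M x) ^ (1 - α / β) * B ^ (α / β))) ^ q := by gcongr
          _ = (D * M x ^ (1 - α / β)) ^ q := by
            rw [ENNReal.mul_rpow_of_nonneg _ _ hθ1.le, hD]; ring_nf
          _ = _ := by
            rw [ENNReal.mul_rpow_of_nonneg _ _ hq0.le, ← ENNReal.rpow_mul, hqp]
    _ = (D ^ q * ∫⁻ x, M x ^ p) ^ (1 / q) := by
        rw [lintegral_const_mul _ (hMm.pow_const p)]
    _ ≤ (D ^ q * (C₄ * ∫⁻ x, ENNReal.ofReal ‖g x‖ ^ p)) ^ (1 / q) := by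
        gcongr
    _ = D * (C₄ ^ (1 / q) * A ^ (1 - α / β)) := by
        rw [ENNReal.mul_rpow_of_nonneg (D ^ q) _ (by positivity),
          ENNReal.mul_rpow_of_nonneg C₄ _ (by positivity),
          hA2, ← ENNReal.rpow_mul D q (1 / q), mul_one_div_cancel hq0.ne', ENNReal.rpow_one]
    _ = (C₃ * (C₀ + C₁) ^ (1 - α / β) * C₄ ^ (1 / q)) * A ^ (1 - α / β) * B ^ (α / β) := by
        rw [hD]; ring
    _ ≤ _ := by
        gcongr
        rw [← ENNReal.ofReal_toReal hCC]
        apply ENNReal.ofReal_le_ofReal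
        rw [ENNReal.toReal_ofReal ENNReal.toReal_nonneg]
        linarith
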